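/- Let m ≥ 4 and let s = (β_1, β_2) ∈ B_m^2 be a degree m, length 2 braid system whose Hurwitz orbit s·B_2 is finite. Then #(s·B_2) ≤ 2·(m-1)!. -/

import Mathlib

open FreeGroup in
/-- The braid relations on `m` strands (generators indexed 0-based by `Fin (m-1)`). -/
def braidRels (m : ℕ) : Set (FreeGroup (Fin (m - 1))) :=
  {r | ∃ i j : Fin (m - 1), (i.val + 2 ≤ j.val ∨ j.val + 2 ≤ i.val) ∧
        r = of i * of j * (of j * of i)⁻¹} ∪
  {r | ∃ i j : Fin (m - 1), (i.val + 1 = j.val ∨ j.val + 1 = i.val) ∧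
        r = of i * of j * of i * (of j * of i * of j)⁻¹}

/-- The braid group on `m` strands. -/
abbrev BraidGroup (m : ℕ) := PresentedGroup (braidRels m)

/-- The Artin generator `σ_i` (1-based index `1 ≤ i ≤ m-1`); junk value `1` out of range. -/
def braidGen (m : ℕ) (i : ℕ) : BraidGroup m :=
  if h : 1 ≤ i ∧ i ≤ m - 1 then PresentedGroup.of ⟨i - 1, by omega⟩ else 1

/-- A braid is periodic if some positive power of it is central. -/
def IsPeriodic {m : ℕ} (β : BraidGroup m) : Prop :=
  ∃ k : ℕ, 1 ≤ k ∧ β ^ k ∈ Subgroup.center (BraidGroup m)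

/-- The elementary Hurwitz move at (0-based) position `i`, as a bijection on `n`-tuples. -/
def hEquiv {G : Type*} [Group G] {n : ℕ} (i : Fin (n - 1)) : Equiv.Perm (Fin n → G) where
  toFun s := fun k =>
    if k.val = i.val then s ⟨i.val + 1, by have := i.isLt; omega⟩
    else if k.val = i.val + 1 then
      (s ⟨i.val + 1, by have := i.isLt; omega⟩)⁻¹ * s ⟨i.val, by have := i.isLt; omega⟩ *
        s ⟨i.val + 1, by have := i.isLt; omega⟩
    else s k
  invFun t := fun k =>
    if k.val = i.val then
      t ⟨i.val, by have := i.isLt; omega⟩ * t ⟨i.val + 1, by have := i.isLt; omega⟩ *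
        (t ⟨i.val, by have := i.isLt; omega⟩)⁻¹
    else if k.val = i.val + 1 then t ⟨i.val, by have := i.isLt; omega⟩
    else t k
  left_inv s := by
    funext k
    have hlt := i.isLt
    rcases k with ⟨kv, hkv⟩
    by_cases h1 : kv = i.val
    · subst h1
      simp [mul_assoc]
    · by_cases h2 : kv = i.val + 1
      · subst h2
        simp
      · simp [h1, h2]
  right_inv t := by
    funext k
    have hlt := i.isLt
    rcases k with ⟨kv, hkv⟩
    by_cases h1 : kv = i.val
    · subst h1
      simp [mul_assoc]
    · by_cases h2 : kv = i.val + 1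
      · subst h2
        simp [mul_assoc]
      · simp [h1, h2]

/-- The (right) Hurwitz action of a word in the generators `σ_1, …, σ_{n-1}` of `B_n`
on `n`-tuples of elements of a group `G`: `hurwitzAct (w₁ * w₂) s = hurwitzAct w₂ (hurwitzAct w₁ s)`. -/
def hurwitzAct {G : Type*} [Group G] {n : ℕ} (w : FreeGroup (Fin (n - 1))) (s : Fin n → G) :
    Fin n → G :=
  (MulOpposite.unop (FreeGroup.lift (fun i => MulOpposite.op (hEquiv (G := G) (n := n) i)) w)) s

/-- The Hurwitz orbit of a braid system. -/
def hurwitzOrbit {G : Type*} [Group G] {n : ℕ} (s : Fin n → G) : Set (Fin n → G) :=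
  {t | ∃ w : FreeGroup (Fin (n - 1)), hurwitzAct w s = t}

/-- The generator `σ_i` (1-based) as a word acting on length-`n` systems. -/
def genWord (n : ℕ) (i : ℕ) : FreeGroup (Fin (n - 1)) :=
  if h : 1 ≤ i ∧ i ≤ n - 1 then FreeGroup.of ⟨i - 1, by omega⟩ else 1

/-- The pure braid word `c_i = (σ_1⁻¹ ⋯ σ_{i-1}⁻¹) σ_i² (σ_{i-1} ⋯ σ_1)`. -/
def cWord (n : ℕ) (i : ℕ) : FreeGroup (Fin (n - 1)) :=
  ((List.range (i - 1)).map (fun t => (genWord n (t + 1))⁻¹)).prod *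
    genWord n i ^ 2 *
    ((List.range (i - 1)).reverse.map (fun t => genWord n (t + 1))).prod

/-- The word `Δ_{(i,j)} = (σ_i σ_{i+1} ⋯ σ_j)(σ_i ⋯ σ_{j-1}) ⋯ (σ_i σ_{i+1})(σ_i)`. -/
def deltaWord (n i j : ℕ) : FreeGroup (Fin (n - 1)) :=
  ((List.range (j - i + 1)).map (fun t =>
    ((List.range (j - t - i + 1)).map (fun u => genWord n (i + u))).prod)).prod

/-- The exponent-sum homomorphism, valued in `Multiplicative ℤ`. -/
def expSumHom {m : ℕ} : BraidGroup m →* Multiplicative ℤ :=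
  PresentedGroup.toGroup (f := fun _ => Multiplicative.ofAdd 1) (by
    rintro r (⟨i, j, -, rfl⟩ | ⟨i, j, -, rfl⟩) <;>
      simp <;> group)

/-- The exponent sum of a braid: `e(σ_i) = 1`. -/
def esum {m : ℕ} (β : BraidGroup m) : ℤ := Multiplicative.toAdd (expSumHom β)

/-- A braid system is reducible if some non-trivial partition of the index set has all
entries from the two parts commuting. -/
def IsReducible {G : Type*} [Group G] {n : ℕ} (s : Fin n → G) : Prop :=
  ∃ I : Set (Fin n), I.Nonempty ∧ Iᶜ.Nonempty ∧ ∀ i ∈ I, ∀ j ∈ Iᶜ, Commute (s i) (s j)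

/-!
The group `B_2` is cyclic, and the square of its generator conjugates both entries of `s` by
`c = s_0 s_1`. If the orbit is finite, some power `c ^ N` therefore commutes with the entries. Let
`k` be the order of the permutation of the strands induced by `c`, so that `c ^ k` is a pure braid.
Pure braids have unique roots, so `c ^ k` and its conjugate by an entry of `s`, which have the same
`N`-th power, coincide. Hence the orbit has at most `2k` elements, and an element of the symmetric
group on `m ≥ 4` letters has order at most `(m - 1)!`.

For the uniqueness of roots, Artin's representation by automorphisms of a free group is faithful: a
braid in its kernel is combed into a part where only the last strand moves and a braid on fewer
strands, and both are trivial. A pure braid sends each free generator to a conjugate, so it acts on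
the group algebra of the free group as the identity on the graded pieces of the augmentation
filtration. In characteristic zero, two such operators with the same `N`-th power agree modulo every
power of the augmentation ideal, and these powers separate the elements of the free group by a
variant of Magnus's representation, whose injectivity is a ping-pong argument.
-/

/-- The endomorphism `T` acts as the identity on every graded piece `J k / J (k + 1)`. -/
def IsUnipotentOn {K M : Type*} [Ring K] [AddCommGroup M] [Module K M] (J : ℕ → Submodule K M)
    (T : Module.End K M) : Prop :=
  ∀ k, ∀ x ∈ J k, T x - x ∈ J (k + 1)

namespace IsUnipotentOn

section Ring

variable {K M : Type*} [Ring K] [AddCommGroup M] [Module K M] {J : ℕ → Submodule K M}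
  {T : Module.End K M}

theorem apply_mem (hJ : Antitone J) (hT : IsUnipotentOn J T) {k : ℕ} {x : M} (hx : x ∈ J k) :
    T x ∈ J k := by
  simpa using add_mem (hJ k.le_succ (hT k x hx)) hx

theorem mul (hJ : Antitone J) {S : Module.End K M} (hS : IsUnipotentOn J S)
    (hT : IsUnipotentOn J T) : IsUnipotentOn J (S * T) := by
  intro k x hx
  simpa using add_mem (hS k (T x) (hT.apply_mem hJ hx)) (hT k x hx)

theorem pow (hJ : Antitone J) (hT : IsUnipotentOn J T) (n : ℕ) : IsUnipotentOn J (T ^ n) := by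
  induction n with
  | zero => simp [IsUnipotentOn]
  | succ n ih => exact pow_succ T n ▸ ih.mul hJ hT

theorem pow_sub_pow_sub_nsmul_mem (hJ : Antitone J) {P Q : Module.End K M}
    (hP : IsUnipotentOn J P) (hQ : IsUnipotentOn J Q) {d : ℕ}
    (hPQ : ∀ k, ∀ x ∈ J k, P x - Q x ∈ J (k + d)) (n : ℕ) {k : ℕ} {x : M} (hx : x ∈ J k) :
    (P ^ n) x - (Q ^ n) x - n • (P x - Q x) ∈ J (k + d + 1) := by
  induction n with
  | zero => simp
  | succ n ih =>
    set y := (P ^ n) x - (Q ^ n) x with hy_def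
    have hy : y ∈ J (k + d) := by
      simpa using add_mem (hJ (k + d).le_succ ih) ((J (k + d)).nsmul_mem (hPQ k x hx) n)
    have hDQ : P ((Q ^ n) x - x) - Q ((Q ^ n) x - x) ∈ J (k + d + 1) := by
      simpa only [add_right_comm] using hPQ (k + 1) _ (hQ.pow hJ n k x hx)
    have split : (P ^ (n + 1)) x - (Q ^ (n + 1)) x - (n + 1) • (P x - Q x) =
        (P y - y) + (y - n • (P x - Q x)) +
          (P ((Q ^ n) x - x) - Q ((Q ^ n) x - x)) := by
      simp only [hy_def, pow_succ', Module.End.mul_apply, map_sub, add_smul, one_smul]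
      abel
    rw [split]
    exact add_mem (add_mem (hP _ y hy) ih) hDQ

end Ring

theorem sub_mem_of_pow_eq_pow {K M : Type*} [DivisionRing K] [CharZero K] [AddCommGroup M]
    [Module K M] {J : ℕ → Submodule K M} (hJ : Antitone J) {P Q : Module.End K M}
    (hP : IsUnipotentOn J P) (hQ : IsUnipotentOn J Q) {N : ℕ} (hN : N ≠ 0) (h : P ^ N = Q ^ N)
    (d : ℕ) : ∀ k, ∀ x ∈ J k, P x - Q x ∈ J (k + d) := by
  induction d with
  | zero => exact fun k x hx => sub_mem (hP.apply_mem hJ hx) (hQ.apply_mem hJ hx)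
  | succ d ih =>
    intro k x hx
    have hmem := pow_sub_pow_sub_nsmul_mem hJ hP hQ ih N hx
    rw [h, sub_self, zero_sub, neg_mem_iff, ← Nat.cast_smul_eq_nsmul K] at hmem
    exact ((J (k + d + 1)).smul_mem_iff (Nat.cast_ne_zero.2 hN)).1 hmem

end IsUnipotentOn

/-- The augmentation ideal of the group algebra `K[G]`, the kernel of the algebra homomorphism
sending every group element to `1`. -/
noncomputable def augmentationIdeal (K G : Type*) [CommRing K] [Group G] :
    Ideal (MonoidAlgebra K G) :=
  RingHom.ker (MonoidAlgebra.lift K K G 1)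

/-- The descending filtration of the group algebra `K[G]` by the powers of its augmentation
ideal. -/
noncomputable def augmentationFiltration (K G : Type*) [CommRing K] [Group G] (k : ℕ) :
    Submodule K (MonoidAlgebra K G) :=
  ((augmentationIdeal K G) ^ k).restrictScalars K

/-- The linear action of the endomorphisms of a group on its group algebra. -/
noncomputable def groupAlgebraEnd (K G : Type*) [CommRing K] [Group G] :
    Monoid.End G →* Module.End K (MonoidAlgebra K G) where
  toFun f := (MonoidAlgebra.mapDomainAlgHom K K f).toLinearMap
  map_one' := congrArg AlgHom.toLinearMap MonoidAlgebra.mapDomainAlgHom_id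
  map_mul' f g := congrArg AlgHom.toLinearMap (MonoidAlgebra.mapDomainAlgHom_comp g f)

section AugmentationIdeal

open MonoidAlgebra

variable {K G : Type*} [CommRing K] [Group G]

instance : (augmentationIdeal K G).IsTwoSided :=
  inferInstanceAs (RingHom.ker (MonoidAlgebra.lift K K G 1)).IsTwoSided

theorem antitone_augmentationFiltration : Antitone (augmentationFiltration K G) :=
  fun _ _ h _ hx => Ideal.pow_le_pow_right h hx

theorem of_sub_one_mem_augmentationIdeal (g : G) : of K G g - 1 ∈ augmentationIdeal K G := by
  simp [augmentationIdeal, RingHom.mem_ker]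

theorem groupAlgebraEnd_of (f : Monoid.End G) (g : G) :
    groupAlgebraEnd K G f (of K G g) = of K G (f g) :=
  mapDomain_single

theorem groupAlgebraEnd_mul (f : Monoid.End G) (x y : MonoidAlgebra K G) :
    groupAlgebraEnd K G f (x * y) = groupAlgebraEnd K G f x * groupAlgebraEnd K G f y :=
  map_mul (mapDomainAlgHom K K f) x y

theorem of_sub_of_mem_augmentationIdeal_sq_of_isConj {g h : G} (hgh : IsConj g h) :
    of K G h - of K G g ∈ augmentationIdeal K G ^ 2 := by
  obtain ⟨c, rfl⟩ := isConj_iff.1 hgh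
  have commutator : of K G (c * g * c⁻¹) - of K G g =
      ((of K G c - 1) * (of K G g - 1) - (of K G g - 1) * (of K G c - 1)) * of K G c⁻¹ := by
    have hc : of K G c * of K G c⁻¹ = 1 := by rw [← map_mul, mul_inv_cancel, map_one]
    simp only [map_mul, sub_mul, mul_sub, one_mul, mul_one, mul_assoc, hc]
    abel
  rw [commutator, Ideal.IsTwoSided.pow_succ, Submodule.pow_one]
  exact Ideal.mul_mem_right _ _ (sub_mem
    (Ideal.mul_mem_mul (of_sub_one_mem_augmentationIdeal c) (of_sub_one_mem_augmentationIdeal g))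
    (Ideal.mul_mem_mul (of_sub_one_mem_augmentationIdeal g) (of_sub_one_mem_augmentationIdeal c)))

theorem isUnipotentOn_groupAlgebraEnd {f : Monoid.End G}
    (hf : ∀ g, of K G (f g) - of K G g ∈ augmentationIdeal K G ^ 2) :
    IsUnipotentOn (augmentationFiltration K G) (groupAlgebraEnd K G f) := by
  set I := augmentationIdeal K G
  set Φ := groupAlgebraEnd K G f
  have sub_mem_sq : ∀ x, Φ x - x ∈ I ^ 2 := by
    intro x
    induction x using MonoidAlgebra.induction_on with
    | of g => simpa only [Φ, groupAlgebraEnd_of] using hf g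
    | add x y hx hy => simpa only [map_add, add_sub_add_comm] using add_mem hx hy
    | smul r x hx => simpa only [map_smul, ← smul_sub] using (I ^ 2).smul_of_tower_mem r hx
  intro k
  change ∀ x ∈ I ^ k, Φ x - x ∈ I ^ (k + 1)
  induction k with
  | zero => exact fun x _ => Ideal.pow_le_pow_right one_le_two (sub_mem_sq x)
  | succ k ih =>
    intro x hx
    rw [Ideal.IsTwoSided.pow_succ] at hx
    induction hx using Submodule.mul_induction_on' with
    | mem_mul_mem a ha b hb =>
      have hΦb : Φ b ∈ I ^ k := by
        simpa using add_mem (Ideal.pow_le_pow_right k.le_succ (ih b hb)) hb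
      have split : Φ (a * b) - a * b = (Φ a - a) * Φ b + a * (Φ b - b) := by
        rw [groupAlgebraEnd_mul, sub_mul, mul_sub]
        abel
      rw [split]
      refine add_mem ?_ ?_
      · rw [show k + 1 + 1 = 2 + k by ring, Ideal.IsTwoSided.pow_add]
        exact Ideal.mul_mem_mul (sub_mem_sq a) hΦb
      · rw [Ideal.IsTwoSided.pow_succ]
        exact Ideal.mul_mem_mul ha (ih b hb)
    | add x _ y _ hx hy => simpa only [map_add, add_sub_add_comm] using add_mem hx hy

theorem of_sub_of_mem_augmentationIdeal_sq_of_forall_isConj {α : Type*}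
    {f : Monoid.End (FreeGroup α)} (hf : ∀ a, IsConj (FreeGroup.of a) (f (FreeGroup.of a)))
    (w : FreeGroup α) : of K _ (f w) - of K _ w ∈ augmentationIdeal K (FreeGroup α) ^ 2 := by
  let q : FreeGroup α →* MonoidAlgebra K (FreeGroup α) ⧸ augmentationIdeal K (FreeGroup α) ^ 2 :=
    (Ideal.Quotient.mk (augmentationIdeal K (FreeGroup α) ^ 2)).toMonoidHom.comp (of K _)
  have hq : q.comp f = q := FreeGroup.ext_hom _ _ fun a =>
    Ideal.Quotient.eq.2 (of_sub_of_mem_augmentationIdeal_sq_of_isConj (hf a))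
  exact Ideal.Quotient.eq.1 (DFunLike.congr_fun hq w)

theorem lift_apply_mem_of_mem_augmentationIdeal_pow {V : Type*} [AddCommGroup V] [Module K V]
    {J : ℕ → Submodule K V} (hJ : Antitone J) {ρ : G →* Module.End K V}
    (hρ : ∀ g, IsUnipotentOn J (ρ g)) {k : ℕ} {x : MonoidAlgebra K G}
    (hx : x ∈ augmentationIdeal K G ^ k) {j : ℕ} {v : V} (hv : v ∈ J j) :
    MonoidAlgebra.lift K (Module.End K V) G ρ x v ∈ J (j + k) := by
  have sub_augmentation_mem : ∀ (x : MonoidAlgebra K G) (j : ℕ), ∀ v ∈ J j,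
      MonoidAlgebra.lift K (Module.End K V) G ρ x v -
        MonoidAlgebra.lift K K G 1 x • v ∈ J (j + 1) := by
    intro x j v hv
    induction x using MonoidAlgebra.induction_on with
    | of g => simpa using hρ g j v hv
    | add x y hx hy =>
      simpa only [map_add, LinearMap.add_apply, add_smul, add_sub_add_comm] using add_mem hx hy
    | smul r x hx =>
      simpa only [map_smul, LinearMap.smul_apply, smul_assoc, ← smul_sub]
        using (J (j + 1)).smul_mem r hx
  induction k generalizing x j v with
  | zero =>
    simpa using add_mem (hJ j.le_succ (sub_augmentation_mem x j v hv))
      ((J j).smul_mem (MonoidAlgebra.lift K K G 1 x) hv)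
  | succ k ih =>
    rw [Submodule.pow_succ] at hx
    induction hx using Submodule.mul_induction_on' with
    | mem_mul_mem a ha b hb =>
      have hbv : MonoidAlgebra.lift K (Module.End K V) G ρ b v ∈ J (j + 1) := by
        simpa [RingHom.mem_ker.1 hb] using sub_augmentation_mem b j v hv
      simpa [add_comm, add_left_comm] using ih ha hbv
    | add x _ y _ hx hy => simpa using add_mem hx hy

end AugmentationIdeal

theorem eq_of_pow_eq_pow_of_sub_mem_augmentationIdeal_sq {K G : Type*} [Field K] [CharZero K]
    [Group G]
    (hG : ∀ g h : G, (∀ k, MonoidAlgebra.of K G g - MonoidAlgebra.of K G h ∈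
      augmentationIdeal K G ^ k) → g = h) {f₁ f₂ : Monoid.End G}
    (hf₁ : ∀ g, MonoidAlgebra.of K G (f₁ g) - MonoidAlgebra.of K G g ∈ augmentationIdeal K G ^ 2)
    (hf₂ : ∀ g, MonoidAlgebra.of K G (f₂ g) - MonoidAlgebra.of K G g ∈ augmentationIdeal K G ^ 2)
    {N : ℕ} (hN : N ≠ 0) (h : f₁ ^ N = f₂ ^ N) : f₁ = f₂ := by
  ext g
  refine hG _ _ fun k => ?_
  rw [← groupAlgebraEnd_of, ← groupAlgebraEnd_of]
  have key := (isUnipotentOn_groupAlgebraEnd hf₁).sub_mem_of_pow_eq_pow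
    antitone_augmentationFiltration (isUnipotentOn_groupAlgebraEnd hf₂) hN
    (by rw [← map_pow, h, map_pow]) k 0 (MonoidAlgebra.of K G g)
    (by rw [augmentationFiltration, Submodule.pow_zero, Ideal.one_eq_top]; trivial)
  rwa [zero_add] at key

/-- The one-parameter subgroup `e ↦ 1 + e • x` attached to an element `x` of square zero. -/
def oneAddZSMulHom {R : Type*} [Ring R] {x : R} (hx : x * x = 0) : Multiplicative ℤ →* R where
  toFun e := 1 + e.toAdd • x
  map_one' := by simp
  map_mul' d e := by
    simp only [toAdd_mul, add_smul, add_mul, mul_add, one_mul, mul_one, smul_mul_smul_comm, hx,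
      smul_zero]
    abel

/-- The word `l` is the unique longest word in the support of `f`. -/
def IsLeadingWord {K α : Type*} [Zero K] (f : List α → K) (l : List α) : Prop :=
  f l ≠ 0 ∧ ∀ l', l.length ≤ l'.length → f l' ≠ 0 → l' = l

theorem IsLeadingWord.unique {K α : Type*} [Zero K] {f : List α → K} {l l' : List α}
    (hl : IsLeadingWord f l) (hl' : IsLeadingWord f l') : l = l' := by
  rcases le_total l.length l'.length with h | h
  · exact (hl.2 l' h hl'.1).symm
  · exact hl'.2 l h hl.1

section Magnus

variable {K α : Type*} [DecidableEq α]

/-- The operator dual to deleting an initial letter `a` not followed by another `a`; the restriction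
makes its square zero. -/
def letterOperator (K : Type*) [CommRing K] (a : α) : Module.End K (List α → K) where
  toFun f
    | [] => 0
    | b :: t => if b = a ∧ t.head? ≠ some a then f t else 0
  map_add' f g := by
    ext (_ | ⟨b, t⟩)
    · simp
    · dsimp; split_ifs <;> simp
  map_smul' r f := by
    ext (_ | ⟨b, t⟩)
    · simp
    · dsimp; split_ifs <;> simp

theorem letterOperator_apply_nil [CommRing K] (a : α) (f : List α → K) :
    letterOperator K a f [] = 0 := rfl

theorem letterOperator_apply_cons [CommRing K] (a b : α) (f : List α → K) (t : List α) :
    letterOperator K a f (b :: t) = if b = a ∧ t.head? ≠ some a then f t else 0 := rfl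

theorem letterOperator_mul_self [CommRing K] (a : α) :
    letterOperator K a * letterOperator K a = 0 := by
  ext f (_ | ⟨b, _ | ⟨c, t⟩⟩) <;>
    simp +contextual [letterOperator_apply_nil, letterOperator_apply_cons]

/-- A variant of the Magnus representation: the generator `a` acts on functions on words as
`1 + letterOperator K a`. -/
def magnusRep (K α : Type*) [CommRing K] [DecidableEq α] :
    FreeGroup α →* (Module.End K (List α → K))ˣ :=
  FreeGroup.lift fun a =>
    (oneAddZSMulHom (letterOperator_mul_self (K := K) a)).toHomUnits (Multiplicative.ofAdd 1)

theorem magnusRep_of_zpow [CommRing K] (a : α) (e : ℤ) :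
    ((magnusRep K α (FreeGroup.of a ^ e) : (Module.End K (List α → K))ˣ) :
      Module.End K (List α → K)) = 1 + e • letterOperator K a := by
  rw [map_zpow, magnusRep, FreeGroup.lift_apply_of, ← map_zpow, ← ofAdd_zsmul, smul_eq_mul,
    mul_one]
  rfl

theorem IsLeadingWord.add_smul_letterOperator [CommRing K] [IsDomain K] {f : List α → K} {a b : α}
    {t : List α} (hab : b ≠ a) (hf : IsLeadingWord f (b :: t)) {c : K} (hc : c ≠ 0) :
    IsLeadingWord (f + c • letterOperator K a f) (a :: b :: t) := by
  have vanish : ∀ l : List α, (b :: t).length < l.length → f l = 0 := fun l hl =>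
    by_contra fun h => hl.ne' (congrArg List.length (hf.2 l hl.le h))
  refine ⟨?_, ?_⟩
  · simp [letterOperator_apply_cons, hab, hc, hf.1, vanish (a :: b :: t) (by simp)]
  · rintro (_ | ⟨d, l⟩) hlen hne
    · simp at hlen
    · rw [Pi.add_apply, vanish (d :: l) (by simp at hlen ⊢; omega), zero_add, Pi.smul_apply,
        letterOperator_apply_cons] at hne
      split_ifs at hne with h
      · rw [h.1, hf.2 l (by simpa using hlen) fun h0 => hne (by simp [h0])]
      · simp at hne

theorem IsLeadingWord.magnusRep_of_zpow_smul [CommRing K] [IsDomain K] [CharZero K]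
    {f : List α → K} {a b : α} {t : List α} (hab : b ≠ a) (hf : IsLeadingWord f (b :: t)) {e : ℤ}
    (he : e ≠ 0) : IsLeadingWord (magnusRep K α (FreeGroup.of a ^ e) • f) (a :: b :: t) := by
  rw [Units.smul_def, magnusRep_of_zpow, ← Int.cast_smul_eq_zsmul K]
  exact hf.add_smul_letterOperator hab (Int.cast_ne_zero.2 he)

open scoped Cardinal in
theorem magnusRep_injective (K α : Type*) [CommRing K] [IsDomain K] [CharZero K]
    [DecidableEq α] [Nontrivial α] : Function.Injective (magnusRep K α) := by
  let syllable (a : α) : FreeGroup Unit →* (Module.End K (List α → K))ˣ :=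
    FreeGroup.lift fun _ => magnusRep K α (FreeGroup.of a)
  suffices Function.Injective (Monoid.CoprodI.lift syllable) by
    have factor : magnusRep K α =
        (Monoid.CoprodI.lift syllable).comp freeGroupEquivCoprodI.toMonoidHom := by
      ext1 a; simp [syllable]
    rw [factor]
    exact this.comp freeGroupEquivCoprodI.injective
  refine Monoid.CoprodI.lift_injective_of_ping_pong syllable ?_
    (fun a => {f : List α → K | ∃ t, IsLeadingWord f (a :: t)}) ?_ ?_ ?_
  · have hcard : ℵ₀ ≤ #(FreeGroup Unit) := Cardinal.aleph0_le_mk _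
    exact Or.inr ⟨Classical.arbitrary α, (Cardinal.natCast_lt_aleph0 (n := 3)).le.trans hcard⟩
  · intro a
    refine ⟨Pi.single [a] 1, [], by simp, fun l _ hl => ?_⟩
    by_contra hne
    exact hl (Pi.single_eq_of_ne hne _)
  · refine fun a b hab => Set.disjoint_left.2 ?_
    rintro f ⟨t, ht⟩ ⟨t', ht'⟩
    exact hab (List.cons.inj (ht.unique ht')).1
  · rintro a b hab h hne _ ⟨f, ⟨t, ht⟩, rfl⟩
    obtain ⟨e, rfl⟩ : ∃ e : ℤ, h = FreeGroup.of () ^ e :=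
      ⟨_, (FreeGroup.freeGroupUnitEquivInt.left_inv h).symm⟩
    have he : e ≠ 0 := by rintro rfl; simp at hne
    refine ⟨b :: t, ?_⟩
    simpa only [syllable, map_zpow, FreeGroup.lift_apply_of]
      using ht.magnusRep_of_zpow_smul hab.symm he

/-- The functions on words that vanish on all words of length less than `k`. -/
def vanishingFiltration (K α : Type*) [CommRing K] (k : ℕ) : Submodule K (List α → K) where
  carrier := {f | ∀ l, l.length < k → f l = 0}
  zero_mem' _ _ := rfl
  add_mem' hf hg l hl := by simp [hf l hl, hg l hl]
  smul_mem' c f hf l hl := by simp [hf l hl]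

theorem antitone_vanishingFiltration (K α : Type*) [CommRing K] :
    Antitone (vanishingFiltration K α) :=
  fun _ _ hjk _ hf l hl => hf l (hl.trans_le hjk)

theorem letterOperator_apply_mem_vanishingFiltration [CommRing K] (a : α) {k : ℕ}
    {f : List α → K} (hf : f ∈ vanishingFiltration K α k) :
    letterOperator K a f ∈ vanishingFiltration K α (k + 1) := by
  rintro (_ | ⟨b, t⟩) hl
  · rfl
  · rw [letterOperator_apply_cons, hf t (by simpa using hl), ite_self]

theorem isUnipotentOn_magnusRep [CommRing K] (w : FreeGroup α) :
    IsUnipotentOn (vanishingFiltration K α) (magnusRep K α w : Module.End K (List α → K)) := by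
  have of_zpow (a : α) (e : ℤ) : IsUnipotentOn (vanishingFiltration K α)
      (magnusRep K α (FreeGroup.of a ^ e) : Module.End K (List α → K)) := by
    intro k f hf
    rw [magnusRep_of_zpow]
    simpa using zsmul_mem (letterOperator_apply_mem_vanishingFiltration a hf) e
  induction w using FreeGroup.induction_on with
  | C1 => simp [IsUnipotentOn]
  | of a => simpa using of_zpow a 1
  | inv_of a _ => simpa using of_zpow a (-1)
  | mul x y hx hy =>
    simpa only [map_mul, Units.val_mul] using hx.mul (antitone_vanishingFiltration K α) hy

end Magnus

theorem eq_of_forall_sub_mem_augmentationIdeal_pow {K α : Type*} [CommRing K] [IsDomain K]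
    [CharZero K] [Nontrivial α] {g h : FreeGroup α}
    (hgh : ∀ k, MonoidAlgebra.of K _ g - MonoidAlgebra.of K _ h ∈
      augmentationIdeal K (FreeGroup α) ^ k) : g = h := by
  classical
  apply magnusRep_injective K α
  ext f l
  have key := lift_apply_mem_of_mem_augmentationIdeal_pow (antitone_vanishingFiltration K α)
    (ρ := (Units.coeHom _).comp (magnusRep K α)) isUnipotentOn_magnusRep (hgh (l.length + 1))
    (j := 0) (v := f) (by simp [vanishingFiltration]) l (by simp)
  simpa [sub_eq_zero] using key

theorem eq_of_pow_eq_pow_of_forall_isConj {α : Type*} [Nontrivial α]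
    {f₁ f₂ : Monoid.End (FreeGroup α)}
    (hf₁ : ∀ a, IsConj (FreeGroup.of a) (f₁ (FreeGroup.of a)))
    (hf₂ : ∀ a, IsConj (FreeGroup.of a) (f₂ (FreeGroup.of a)))
    {N : ℕ} (hN : N ≠ 0) (h : f₁ ^ N = f₂ ^ N) : f₁ = f₂ :=
  eq_of_pow_eq_pow_of_sub_mem_augmentationIdeal_sq (K := ℚ)
    (fun _ _ => eq_of_forall_sub_mem_augmentationIdeal_pow)
    (of_sub_of_mem_augmentationIdeal_sq_of_forall_isConj hf₁)
    (of_sub_of_mem_augmentationIdeal_sq_of_forall_isConj hf₂) hN h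

section FreeGroup

open FreeGroup (of)

variable {α : Type*}

theorem eq_of_isConj_freeGroup_of {a b : α} (h : IsConj (of a) (of b)) : a = b := by
  classical
  let count : FreeGroup α →* Multiplicative ℤ :=
    FreeGroup.lift fun c => Multiplicative.ofAdd (if c = a then 1 else 0)
  simpa [count, isConj_iff_eq, eq_comm] using count.map_isConj h

/-- The endomorphism of a free group that sends the generator `a` to `1` and fixes all others. -/
def killGen [DecidableEq α] (a : α) : FreeGroup α →* FreeGroup α :=
  FreeGroup.lift fun b => if b = a then 1 else of b

variable [DecidableEq α]

theorem killGen_of_self (a : α) : killGen a (of a) = 1 := by simp [killGen]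

theorem killGen_of_ne {a b : α} (h : b ≠ a) : killGen a (of b) = of b := by simp [killGen, h]

theorem comp_killGen_eq_self {G : Type*} [Group G] {f : FreeGroup α →* G} {a : α}
    (hf : f (of a) = 1) : f.comp (killGen a) = f := by
  ext b
  rcases eq_or_ne b a with rfl | hb
  · simp [killGen_of_self, hf]
  · simp [killGen_of_ne hb]

-- `killGen a` lifts to a map `ψ` into the wreath product of `ℤ` by `FreeGroup α` that sends `a` to
-- a point mass in the base group; the shifts fixing a point mass are trivial.
theorem killGen_eq_one_of_commute {a : α} {g : FreeGroup α} (h : Commute g (of a)) :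
    killGen a g = 1 := by
  let d : FreeGroup α → Multiplicative ℤ := Pi.mulSingle 1 (Multiplicative.ofAdd 1)
  let ψ : FreeGroup α →* RegularWreathProduct (Multiplicative ℤ) (FreeGroup α) :=
    FreeGroup.lift fun b => if b = a then ⟨d, 1⟩ else RegularWreathProduct.inl (of b)
  have right_ψ : (RegularWreathProduct.rightHom).comp ψ = killGen a := by
    ext b
    rcases eq_or_ne b a with rfl | hb
    · simp [ψ, killGen_of_self]
    · simp [ψ, hb, killGen_of_ne hb]
  have hright : (ψ g).right = killGen a g := DFunLike.congr_fun right_ψ g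
  have hleft := congrFun (congrArg RegularWreathProduct.left (h.map ψ).eq) (killGen a g)
  have hd : d 1 = d (killGen a g) := by
    simpa [ψ, hright, mul_comm] using hleft
  by_contra hne
  simp [d, Pi.mulSingle_eq_of_ne hne] at hd

end FreeGroup

section Artin

open FreeGroup (of)

/-- The Artin automorphism `x_i ↦ x_{i+1}`, `x_{i+1} ↦ x_{i+1}⁻¹ x_i x_{i+1}` of the free group on
`x_0, x_1, …`, fixing all other generators. -/
def artinAut (i : ℕ) : MulAut (FreeGroup ℕ) :=
  MonoidHom.toMulEquiv
    (FreeGroup.lift fun j => if j = i then of (i + 1)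
      else if j = i + 1 then (of (i + 1))⁻¹ * of i * of (i + 1) else of j)
    (FreeGroup.lift fun j => if j = i then of i * of (i + 1) * (of i)⁻¹
      else if j = i + 1 then of i else of j)
    (by
      ext j
      rcases eq_or_ne j i with rfl | h
      · simp
      rcases eq_or_ne j (i + 1) with rfl | h'
      · simp [mul_assoc]
      · simp [h, h'])
    (by
      ext j
      rcases eq_or_ne j i with rfl | h
      · simp [mul_assoc]
      rcases eq_or_ne j (i + 1) with rfl | h'
      · simp
      · simp [h, h'])

theorem artinAut_of_self (i : ℕ) : artinAut i (of i) = of (i + 1) := by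
  simp [artinAut]

theorem artinAut_of_succ (i : ℕ) :
    artinAut i (of (i + 1)) = (of (i + 1))⁻¹ * of i * of (i + 1) := by
  simp [artinAut]

theorem artinAut_of_ne {i j : ℕ} (h : j ≠ i) (h' : j ≠ i + 1) : artinAut i (of j) = of j := by
  simp [artinAut, h, h']

theorem mulAut_freeGroup_ext {α : Type*} {φ ψ : MulAut (FreeGroup α)}
    (h : ∀ a, φ (of a) = ψ (of a)) : φ = ψ :=
  MulEquiv.toMonoidHom_injective (FreeGroup.ext_hom _ _ h)

theorem commute_artinAut {i j : ℕ} (h : i + 2 ≤ j) : Commute (artinAut i) (artinAut j) := by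
  have hi : artinAut i (of j) = of j := artinAut_of_ne (by omega) (by omega)
  have hi' : artinAut i (of (j + 1)) = of (j + 1) := artinAut_of_ne (by omega) (by omega)
  have hj : artinAut j (of i) = of i := artinAut_of_ne (by omega) (by omega)
  have hj' : artinAut j (of (i + 1)) = of (i + 1) := artinAut_of_ne (by omega) (by omega)
  refine mulAut_freeGroup_ext fun a => ?_
  simp only [MulAut.mul_apply]
  by_cases hai : a = i ∨ a = i + 1
  · rcases hai with rfl | rfl <;>
      simp only [hj, hj', artinAut_of_self, artinAut_of_succ, map_mul, map_inv]
  by_cases haj : a = j ∨ a = j + 1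
  · rcases haj with rfl | rfl <;>
      simp only [hi, hi', artinAut_of_self, artinAut_of_succ, map_mul, map_inv]
  rw [not_or] at hai haj
  simp only [artinAut_of_ne hai.1 hai.2, artinAut_of_ne haj.1 haj.2]

theorem artinAut_braid (i : ℕ) : artinAut i * artinAut (i + 1) * artinAut i =
    artinAut (i + 1) * artinAut i * artinAut (i + 1) := by
  have h₁ : artinAut i (of (i + 1 + 1)) = of (i + 1 + 1) := artinAut_of_ne (by omega) (by omega)
  have h₂ : artinAut (i + 1) (of i) = of i := artinAut_of_ne (by omega) (by omega)
  refine mulAut_freeGroup_ext fun a => ?_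
  simp only [MulAut.mul_apply]
  by_cases ha : a = i ∨ a = i + 1 ∨ a = i + 1 + 1
  · rcases ha with rfl | rfl | rfl <;>
      simp only [h₁, h₂, artinAut_of_self, artinAut_of_succ, map_mul, map_inv]
    group
  · simp only [not_or] at ha
    simp only [artinAut_of_ne ha.1 ha.2.1, artinAut_of_ne ha.2.1 ha.2.2]

theorem killGen_comp_artinAut_sq (i : ℕ) :
    (killGen (i + 1)).comp (artinAut i ^ 2).toMonoidHom = killGen (i + 1) := by
  ext j
  by_cases hj : j = i ∨ j = i + 1
  · rcases hj with rfl | rfl <;>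
      simp [pow_two, artinAut_of_self, artinAut_of_succ, killGen_of_self]
  · rw [not_or] at hj
    simp [pow_two, artinAut_of_ne hj.1 hj.2]

theorem killGen_comp_artinAut {i n : ℕ} (h : i + 1 < n) :
    (killGen n).comp (artinAut i).toMonoidHom = (artinAut i).toMonoidHom.comp (killGen n) := by
  ext j
  by_cases hj : j = i ∨ j = i + 1
  · have hi : killGen n (of i) = of i := killGen_of_ne (by omega)
    have hi' : killGen n (of (i + 1)) = of (i + 1) := killGen_of_ne (by omega)
    rcases hj with rfl | rfl <;> simp [artinAut_of_self, artinAut_of_succ, hi, hi']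
  · rw [not_or] at hj
    rcases eq_or_ne j n with rfl | hjn
    · simp [artinAut_of_ne hj.1 hj.2, killGen_of_self]
    · simp [artinAut_of_ne hj.1 hj.2, killGen_of_ne hjn]

end Artin

section Combing

variable {G : Type*} [Group G]

/-- The relations of the Artin generators of the braid group on `n` strands, for the first `n - 1`
terms of a sequence. -/
structure IsBraidSequence (s : ℕ → G) (n : ℕ) : Prop where
  commute : ∀ {i j}, i + 2 ≤ j → j + 1 < n → Commute (s i) (s j)
  braid : ∀ {i}, i + 2 < n → s i * s (i + 1) * s i = s (i + 1) * s i * s (i + 1)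

theorem IsBraidSequence.mono {s : ℕ → G} {m n : ℕ} (hs : IsBraidSequence s n) (h : m ≤ n) :
    IsBraidSequence s m where
  commute hij hj := hs.commute hij (by omega)
  braid hi := hs.braid (by omega)

/-- The subgroup of braids on the first `n` strands. -/
def strandSubgroup (s : ℕ → G) (n : ℕ) : Subgroup G :=
  Subgroup.closure (s '' {k | k + 1 < n})

/-- The product `s_{n-1} ⋯ s_{j+1} s_j`, which carries the strand `j` to the position `n`. It is `1`
for `n ≤ j`. -/
def descProd (s : ℕ → G) : ℕ → ℕ → G
  | 0, _ => 1
  | n + 1, j => if j ≤ n then s n * descProd s n j else 1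

/-- The pure braid in which the strand `n` winds once around the strand `i < n`. -/
def pureGen (s : ℕ → G) (n i : ℕ) : G :=
  descProd s n (i + 1) * s i ^ 2 * (descProd s n (i + 1))⁻¹

/-- The homomorphism from a free group whose image consists of the pure braids in which only the
strand `n` moves. -/
def pureHom (s : ℕ → G) (n : ℕ) : FreeGroup (Fin n) →* G :=
  FreeGroup.lift fun i => pureGen s n i

variable {s : ℕ → G}

theorem mem_strandSubgroup {n k : ℕ} (hk : k + 1 < n) : s k ∈ strandSubgroup s n :=
  Subgroup.subset_closure ⟨k, hk, rfl⟩

theorem pureGen_mem_range_pureHom {n i : ℕ} (hi : i < n) : pureGen s n i ∈ (pureHom s n).range :=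
  ⟨FreeGroup.of ⟨i, hi⟩, FreeGroup.lift_apply_of⟩

theorem descProd_of_le {n j : ℕ} (h : n ≤ j) : descProd s n j = 1 := by
  cases n with
  | zero => rfl
  | succ n => exact if_neg (by omega)

theorem descProd_eq_mul {n j : ℕ} (h : j < n) :
    descProd s n j = descProd s n (j + 1) * s j := by
  induction n with
  | zero => omega
  | succ n ih =>
    rw [descProd, descProd, if_pos (by omega)]
    rcases eq_or_ne j n with rfl | hj
    · rw [if_neg (by omega), descProd_of_le le_rfl, one_mul, mul_one]
    · rw [if_pos (by omega), ih (by omega), mul_assoc]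

theorem commute_descProd {a : G} {n j : ℕ} (h : ∀ l, j ≤ l → l < n → Commute a (s l)) :
    Commute a (descProd s n j) := by
  induction n with
  | zero => exact Commute.one_right a
  | succ n ih =>
    rw [descProd]
    split_ifs with hj
    · exact (h n hj (by omega)).mul_right (ih fun l hjl hl => h l hjl (by omega))
    · exact Commute.one_right a

theorem conj_descProd {n k j : ℕ} (hs : IsBraidSequence s (n + 1)) (hjk : j ≤ k) (hk : k + 1 < n) :
    descProd s n j * s (k + 1) * (descProd s n j)⁻¹ = s k := by
  induction hjk using Nat.decreasingInduction with
  | self =>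
    have hcomm : Commute (s k) (descProd s n (k + 2)) :=
      commute_descProd fun l hl hln => hs.commute hl (by omega)
    rw [descProd_eq_mul (by omega), descProd_eq_mul hk, mul_inv_eq_iff_eq_mul]
    calc descProd s n (k + 2) * s (k + 1) * s k * s (k + 1)
        = descProd s n (k + 2) * (s (k + 1) * s k * s (k + 1)) := by group
      _ = descProd s n (k + 2) * s k * s (k + 1) * s k := by
          rw [← hs.braid (by omega)]
          group
      _ = s k * (descProd s n (k + 2) * s (k + 1) * s k) := by
          rw [← hcomm.eq]
          group
  | of_succ j hj ih =>
    have hcomm : Commute (s j) (s (k + 1)) := hs.commute (by omega) (by omega)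
    rw [descProd_eq_mul (by omega), mul_assoc _ (s j), hcomm.eq]
    simpa [mul_assoc] using ih

theorem commute_pureGen {n k i : ℕ} (hs : IsBraidSequence s (n + 1)) (hi : i < n) (hk : k + 1 < n)
    (hik : i ≠ k) (hik' : i ≠ k + 1) : Commute (s k) (pureGen s n i) := by
  rcases lt_or_gt_of_ne hik with hlt | hgt
  · rw [← conj_descProd hs hlt hk, pureGen, Commute.conj_iff]
    exact ((hs.commute (by omega) (by omega)).pow_left 2).symm
  · have hcomm : Commute (s k) (descProd s n (i + 1)) :=
      commute_descProd fun l hl hln => hs.commute (by omega) (by omega)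
    exact (hcomm.mul_right ((hs.commute (by omega) (by omega)).pow_right 2)).mul_right
      hcomm.inv_right

theorem conj_pureGen_self {n k : ℕ} (hs : IsBraidSequence s (n + 1)) (hk : k + 1 < n) :
    s k * pureGen s n k * (s k)⁻¹ = pureGen s n (k + 1) := by
  have hcomm : Commute (s k) (descProd s n (k + 2)) :=
    commute_descProd fun l hl hln => hs.commute hl (by omega)
  have hconj : SemiconjBy (s k * s (k + 1)) (s k) (s (k + 1)) :=
    (hs.braid (by omega)).trans (mul_assoc _ _ _)
  rw [pureGen, pureGen, descProd_eq_mul hk]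
  calc s k * (descProd s n (k + 2) * s (k + 1) * s k ^ 2 * (descProd s n (k + 2) * s (k + 1))⁻¹) *
        (s k)⁻¹
      = (s k * descProd s n (k + 2)) * (s (k + 1) * s k ^ 2 * (s (k + 1))⁻¹) *
        (s k * descProd s n (k + 2))⁻¹ := by group
    _ = descProd s n (k + 2) * (s k * s (k + 1) * s k ^ 2 * (s k * s (k + 1))⁻¹) *
        (descProd s n (k + 2))⁻¹ := by
        rw [hcomm.eq]
        group
    _ = descProd s n (k + 2) * s (k + 1) ^ 2 * (descProd s n (k + 2))⁻¹ := by
        rw [(hconj.pow_right 2).eq, mul_inv_cancel_right]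

theorem conj_pureGen_succ {n k : ℕ} (hs : IsBraidSequence s (n + 1)) (hk : k + 1 < n) :
    s k * pureGen s n (k + 1) * (s k)⁻¹ =
      (pureGen s n (k + 1))⁻¹ * pureGen s n k * pureGen s n (k + 1) := by
  have hcomm : Commute (s k) (descProd s n (k + 2)) :=
    commute_descProd fun l hl hln => hs.commute hl (by omega)
  have hconj : SemiconjBy (s (k + 1) * s k) (s (k + 1)) (s k) :=
    (hs.braid (by omega)).symm.trans (mul_assoc _ _ _)
  rw [pureGen, pureGen, descProd_eq_mul hk]
  calc s k * (descProd s n (k + 2) * s (k + 1) ^ 2 * (descProd s n (k + 2))⁻¹) * (s k)⁻¹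
      = (s k * descProd s n (k + 2)) * s (k + 1) ^ 2 * (s k * descProd s n (k + 2))⁻¹ := by group
    _ = descProd s n (k + 2) * ((s (k + 1))⁻¹ * (s (k + 1) * s k * s (k + 1) ^ 2) * (s k)⁻¹) *
        (descProd s n (k + 2))⁻¹ := by
        rw [hcomm.eq]
        group
    _ = _ := by
        rw [(hconj.pow_right 2).eq]
        group

theorem mem_normalizer_range_pureHom {n k : ℕ} (hs : IsBraidSequence s (n + 1)) (hk : k + 1 < n) :
    s k ∈ Subgroup.normalizer ((pureHom s n).range : Set G) := by
  set U := (pureHom s n).range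
  have hA {i : ℕ} (hi : i < n) : pureGen s n i ∈ U := pureGen_mem_range_pureHom hi
  have hself := conj_pureGen_self hs hk
  have hsucc := conj_pureGen_succ hs hk
  have hrange : U = Subgroup.closure (Set.range fun i : Fin n => pureGen s n i) :=
    FreeGroup.range_lift_eq_closure
  rw [Subgroup.mem_normalizer_iff_map_conj_eq]
  set V := U.map (MulAut.conj (s k) : G →* G) with hV
  have hconj {u : G} (hu : u ∈ U) : s k * u * (s k)⁻¹ ∈ V := ⟨u, hu, rfl⟩
  apply le_antisymm
  · rw [hV, Subgroup.map_le_iff_le_comap]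
    nth_rw 1 [hrange]
    rw [Subgroup.closure_le]
    rintro _ ⟨i, rfl⟩
    change s k * pureGen s n i * (s k)⁻¹ ∈ U
    rcases eq_or_ne (i : ℕ) k with hik | hik
    · rw [hik, hself]
      exact hA hk
    rcases eq_or_ne (i : ℕ) (k + 1) with hik' | hik'
    · rw [hik', hsucc]
      exact mul_mem (mul_mem (inv_mem (hA hk)) (hA (by omega))) (hA hk)
    · rw [(commute_pureGen hs i.2 hk hik hik').eq, mul_inv_cancel_right]
      exact hA i.2
  · nth_rw 1 [hrange]
    rw [Subgroup.closure_le]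
    have hsucc_mem : pureGen s n (k + 1) ∈ V := hself ▸ hconj (hA (by omega))
    rintro _ ⟨i, rfl⟩
    change pureGen s n i ∈ V
    rcases eq_or_ne (i : ℕ) k with hik | hik
    · have hmul := mul_mem (mul_mem hsucc_mem (hconj (hA hk))) (inv_mem hsucc_mem)
      rw [hsucc] at hmul
      simpa [hik, mul_assoc] using hmul
    rcases eq_or_ne (i : ℕ) (k + 1) with hik' | hik'
    · exact hik' ▸ hsucc_mem
    · have hmem := hconj (hA i.2)
      rwa [(commute_pureGen hs i.2 hk hik hik').eq, mul_inv_cancel_right] at hmem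

theorem strandSubgroup_le_normalizer_range_pureHom {n : ℕ} (hs : IsBraidSequence s (n + 1)) :
    strandSubgroup s n ≤ Subgroup.normalizer ((pureHom s n).range : Set G) := by
  rw [strandSubgroup, Subgroup.closure_le]
  rintro _ ⟨k, hk, rfl⟩
  exact mem_normalizer_range_pureHom hs hk

theorem descProd_mul_mul_inv_mem {n j k : ℕ} (hs : IsBraidSequence s (n + 1)) (hj : j ≤ n)
    (hk : k < n) : descProd s n j * s k * (descProd s n (Equiv.swap k (k + 1) j))⁻¹ ∈
    (pureHom s n).range ⊔ strandSubgroup s n := by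
  rcases lt_trichotomy j k with hlt | rfl | hgt
  · rw [Equiv.swap_apply_of_ne_of_ne (by omega) (by omega)]
    obtain ⟨l, rfl⟩ : ∃ l, k = l + 1 := ⟨k - 1, by omega⟩
    rw [conj_descProd hs (by omega) hk]
    exact Subgroup.mem_sup_right (mem_strandSubgroup hk)
  · rw [Equiv.swap_apply_left, descProd_eq_mul hk, mul_assoc _ (s j) (s j), ← pow_two]
    exact Subgroup.mem_sup_left (pureGen_mem_range_pureHom hk)
  rcases eq_or_ne j (k + 1) with rfl | hne
  · rw [Equiv.swap_apply_right, ← descProd_eq_mul hk, mul_inv_cancel]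
    exact one_mem _
  · have hcomm : Commute (s k) (descProd s n j) :=
      commute_descProd fun l hl hln => hs.commute (by omega) (by omega)
    rw [Equiv.swap_apply_of_ne_of_ne (by omega) (by omega), ← hcomm.eq, mul_inv_cancel_right]
    exact Subgroup.mem_sup_right (mem_strandSubgroup (by omega))

-- The cosets of the subgroup generated by the two factors are indexed by the position `j` from
-- which the strand `n` comes.
theorem exists_mul_inv_descProd_mem {n : ℕ} (hs : IsBraidSequence s (n + 1)) {b : G}
    (hb : b ∈ strandSubgroup s (n + 1)) :
    ∃ j ≤ n, b * (descProd s n j)⁻¹ ∈ (pureHom s n).range ⊔ strandSubgroup s n := by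
  rw [strandSubgroup] at hb
  induction hb using Subgroup.closure_induction_right with
  | one => exact ⟨n, le_rfl, by simp [descProd_of_le, one_mem]⟩
  | mul_right b _ _ hk ih =>
    obtain ⟨k, hk, rfl⟩ := hk
    obtain ⟨j, hj, hmem⟩ := ih
    replace hk : k < n := Nat.lt_of_succ_lt_succ hk
    refine ⟨Equiv.swap k (k + 1) j, ?_, ?_⟩
    · rw [Equiv.swap_apply_def]
      split_ifs <;> omega
    · simpa [mul_assoc] using mul_mem hmem (descProd_mul_mul_inv_mem hs hj hk)
  | mul_inv_cancel b _ _ hk ih =>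
    obtain ⟨k, hk, rfl⟩ := hk
    obtain ⟨j, hj, hmem⟩ := ih
    replace hk : k < n := Nat.lt_of_succ_lt_succ hk
    have hswap : Equiv.swap k (k + 1) j ≤ n := by
      rw [Equiv.swap_apply_def]
      split_ifs <;> omega
    refine ⟨Equiv.swap k (k + 1) j, hswap, ?_⟩
    simpa [mul_assoc] using mul_mem hmem (inv_mem (descProd_mul_mul_inv_mem hs hswap hk))

theorem exists_eq_pureHom_mul_mul_descProd {n : ℕ} (hs : IsBraidSequence s (n + 1)) {b : G}
    (hb : b ∈ strandSubgroup s (n + 1)) :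
    ∃ w, ∃ h ∈ strandSubgroup s n, ∃ j ≤ n, b = pureHom s n w * h * descProd s n j := by
  obtain ⟨j, hj, hmem⟩ := exists_mul_inv_descProd_mem hs hb
  rw [← SetLike.mem_coe, Subgroup.coe_mul_of_right_le_normalizer_left _ _
    (strandSubgroup_le_normalizer_range_pureHom hs)] at hmem
  obtain ⟨_, ⟨w, rfl⟩, h, hh, hmul⟩ := hmem
  exact ⟨w, h, hh, j, hj, eq_mul_of_mul_inv_eq hmul.symm⟩

end Combing

section ArtinRepresentation

open FreeGroup (of)

variable {G : Type*} [Group G] {s : ℕ → G} {ρ : G →* MulAut (FreeGroup ℕ)} {n : ℕ}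

theorem map_descProd_of_self (hρ : ∀ i < n, ρ (s i) = artinAut i) {j : ℕ} (hj : j ≤ n) :
    ρ (descProd s n j) (of j) = of n := by
  induction n with
  | zero =>
    obtain rfl : j = 0 := by omega
    simp [descProd]
  | succ n ih =>
    rcases eq_or_lt_of_le hj with rfl | hlt
    · simp [descProd_of_le]
    · rw [descProd, if_pos (by omega), map_mul, MulAut.mul_apply,
        ih (fun i hi => hρ i (by omega)) (by omega), hρ n (by omega), artinAut_of_self]

theorem map_descProd_of_lt (hρ : ∀ i < n, ρ (s i) = artinAut i) {i j : ℕ} (hij : i < j) :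
    ρ (descProd s n j) (of i) = of i := by
  induction n with
  | zero => simp [descProd]
  | succ n ih =>
    rw [descProd]
    split_ifs with hj
    · rw [map_mul, MulAut.mul_apply, ih fun i hi => hρ i (by omega), hρ n (by omega),
        artinAut_of_ne (by omega) (by omega)]
    · simp

theorem map_pureGen_map_descProd (i : ℕ) (x : FreeGroup ℕ) :
    ρ (pureGen s n i) (ρ (descProd s n (i + 1)) x) = ρ (descProd s n (i + 1)) (ρ (s i ^ 2) x) := by
  simp only [← MulAut.mul_apply, ← map_mul, pureGen, inv_mul_cancel_right]

theorem map_pureGen_of (hρ : ∀ i < n, ρ (s i) = artinAut i) {i : ℕ} (hi : i < n) :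
    ρ (pureGen s n i) (of n) = (of i * of n)⁻¹ * of n * (of i * of n) := by
  have hn : ρ (descProd s n (i + 1)) (of (i + 1)) = of n := map_descProd_of_self hρ hi
  have hi' : ρ (descProd s n (i + 1)) (of i) = of i := map_descProd_of_lt hρ (by omega)
  have hsq : (artinAut i ^ 2) (of (i + 1)) =
      (of i * of (i + 1))⁻¹ * of (i + 1) * (of i * of (i + 1)) := by
    simp [pow_two, artinAut_of_self, artinAut_of_succ, mul_assoc]
  conv_lhs => rw [← hn, map_pureGen_map_descProd, map_pow, hρ i hi, hsq]
  simp only [map_mul, map_inv, hn, hi']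

theorem killGen_map_pureGen (hρ : ∀ i < n, ρ (s i) = artinAut i) {i : ℕ} (hi : i < n)
    (x : FreeGroup ℕ) : killGen n (ρ (pureGen s n i) x) = killGen n x := by
  let f := (killGen n).comp (ρ (descProd s n (i + 1))).toMonoidHom
  have hf : f.comp (killGen (i + 1)) = f := comp_killGen_eq_self (by
    simp [f, map_descProd_of_self hρ hi, killGen_of_self])
  obtain ⟨y, rfl⟩ := (ρ (descProd s n (i + 1))).surjective x
  rw [map_pureGen_map_descProd, map_pow, hρ i hi]
  calc f ((artinAut i ^ 2) y) = f (killGen (i + 1) ((artinAut i ^ 2) y)) :=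
        (DFunLike.congr_fun hf _).symm
    _ = f (killGen (i + 1) y) := congrArg f (DFunLike.congr_fun (killGen_comp_artinAut_sq i) y)
    _ = f y := DFunLike.congr_fun hf y

theorem killGen_map_pureHom (hρ : ∀ i < n, ρ (s i) = artinAut i) (w : FreeGroup (Fin n))
    (x : FreeGroup ℕ) : killGen n (ρ (pureHom s n w) x) = killGen n x := by
  induction w using FreeGroup.induction_on generalizing x with
  | C1 => simp
  | of i => simpa [pureHom] using killGen_map_pureGen hρ i.2 x
  | inv_of i ih => simpa [map_inv] using (ih (ρ (pureHom s n (of i)⁻¹) x)).symm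
  | mul v w hv hw => rw [map_mul, map_mul, MulAut.mul_apply, hv, hw]

theorem exists_map_pureHom_of_eq_conj (hρ : ∀ i < n, ρ (s i) = artinAut i)
    (w : FreeGroup (Fin n)) :
    ∃ g, ρ (pureHom s n w) (of n) = g⁻¹ * of n * g ∧ killGen n g = FreeGroup.map Fin.val w := by
  induction w using FreeGroup.induction_on with
  | C1 => exact ⟨1, by simp, by simp⟩
  | of i =>
    refine ⟨of (i : ℕ) * of n, by simpa [pureHom] using map_pureGen_of hρ i.2, ?_⟩
    simp [killGen_of_self, killGen_of_ne i.2.ne]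
  | inv_of i ih =>
    obtain ⟨g, hconj, hkill⟩ := ih
    refine ⟨(ρ (pureHom s n (of i)⁻¹) g)⁻¹, ?_, ?_⟩
    · have happly := congrArg (ρ (pureHom s n (of i)⁻¹)) hconj
      simp only [map_mul, map_inv, MulAut.inv_apply_self] at happly ⊢
      nth_rw 2 [happly]
      group
    · rw [map_inv, killGen_map_pureHom hρ, hkill, map_inv]
  | mul v w hv hw =>
    obtain ⟨g, hg, hg'⟩ := hv
    obtain ⟨k, hk, hk'⟩ := hw
    refine ⟨g * ρ (pureHom s n v) k, ?_, ?_⟩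
    · simp only [map_mul, MulAut.mul_apply, map_inv, hg, hk, mul_inv_rev, mul_assoc]
    · rw [map_mul, killGen_map_pureHom hρ, hg', hk', map_mul]

theorem killGen_map_of_mem_strandSubgroup (hρ : ∀ i < n, ρ (s i) = artinAut i) {h : G}
    (hh : h ∈ strandSubgroup s n) (x : FreeGroup ℕ) :
    killGen n (ρ h x) = ρ h (killGen n x) := by
  rw [strandSubgroup] at hh
  induction hh using Subgroup.closure_induction generalizing x with
  | one => simp
  | mem _ hk =>
    obtain ⟨k, hk, rfl⟩ := hk
    rw [hρ k (Nat.lt_of_succ_lt hk)]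
    exact DFunLike.congr_fun (killGen_comp_artinAut hk) x
  | mul a b _ _ ha hb => rw [map_mul, MulAut.mul_apply, ha, hb, MulAut.mul_apply]
  | inv a _ ha =>
    apply (ρ a).injective
    simp [← ha]

theorem map_of_eq_of_mem_strandSubgroup (hρ : ∀ i < n, ρ (s i) = artinAut i) {h : G}
    (hh : h ∈ strandSubgroup s n) : ρ h (of n) = of n := by
  suffices strandSubgroup s n ≤ (MulAction.stabilizer (MulAut (FreeGroup ℕ)) (of n)).comap ρ from
    this hh
  rw [strandSubgroup, Subgroup.closure_le]
  rintro _ ⟨k, hk, rfl⟩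
  change ρ (s k) (of n) = of n
  replace hk : k + 1 < n := hk
  rw [hρ k (by omega), artinAut_of_ne (by omega) (by omega)]

theorem eq_one_of_map_pureHom_mul_mul_descProd_eq_one (hρ : ∀ i < n, ρ (s i) = artinAut i)
    {w : FreeGroup (Fin n)} {h : G} (hh : h ∈ strandSubgroup s n) {j : ℕ} (hj : j ≤ n)
    (hmap : ρ (pureHom s n w * h * descProd s n j) = 1) (hfaithful : ρ h = 1 → h = 1) :
    pureHom s n w * h * descProd s n j = 1 := by
  obtain ⟨g, hconj, hkill⟩ := exists_map_pureHom_of_eq_conj hρ w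
  have hfix := map_of_eq_of_mem_strandSubgroup hρ hh
  have happly (x : FreeGroup ℕ) : ρ (pureHom s n w) (ρ h (ρ (descProd s n j) x)) = x := by
    simpa only [map_mul, MulAut.mul_apply, MulAut.one_apply] using DFunLike.congr_fun hmap x
  obtain rfl : n = j := eq_of_isConj_freeGroup_of <| isConj_iff.mpr ⟨g⁻¹, by
    rw [inv_inv, ← hconj, ← happly (of j), map_descProd_of_self hρ hj, hfix]⟩
  simp only [descProd_of_le le_rfl, map_one, MulAut.one_apply] at happly
  have hh_one : h = 1 := hfaithful <| mulAut_freeGroup_ext fun i => by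
    rcases eq_or_ne i n with rfl | hi
    · exact hfix
    · simpa [killGen_map_pureHom hρ, killGen_map_of_mem_strandSubgroup hρ hh, killGen_of_ne hi]
        using congrArg (killGen n) (happly (of i))
  have hcomm : Commute g (of n) := by
    have hself := happly (of n)
    rw [hfix, hconj, mul_assoc, inv_mul_eq_iff_eq_mul] at hself
    exact hself.symm
  have hw : w = 1 := FreeGroup.map_injective Fin.val_injective <| by
    rw [← hkill, killGen_eq_one_of_commute hcomm, map_one]
  rw [hw, hh_one, descProd_of_le le_rfl, map_one, one_mul, one_mul]

theorem eq_one_of_map_eq_one_of_mem_strandSubgroup (hs : IsBraidSequence s n)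
    (hρ : ∀ i, i + 1 < n → ρ (s i) = artinAut i) {b : G} (hb : b ∈ strandSubgroup s n)
    (hmap : ρ b = 1) : b = 1 := by
  induction n generalizing b with
  | zero => simpa [strandSubgroup] using hb
  | succ n ih =>
    obtain ⟨w, h, hh, j, hj, rfl⟩ := exists_eq_pureHom_mul_mul_descProd hs hb
    exact eq_one_of_map_pureHom_mul_mul_descProd_eq_one (fun i hi => hρ i (by omega)) hh hj hmap
      (ih (hs.mono n.le_succ) (fun i hi => hρ i (by omega)) hh)

end ArtinRepresentation

section BraidGroup

open FreeGroup (of)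

theorem braidGen_succ {m : ℕ} (i : Fin (m - 1)) : braidGen m (i + 1) = PresentedGroup.of i := by
  simp [braidGen]

theorem isBraidSequence_braidGen (m : ℕ) : IsBraidSequence (fun i => braidGen m (i + 1)) m where
  commute {i j} hij hj := by
    rw [braidGen_succ ⟨i, by omega⟩, braidGen_succ ⟨j, by omega⟩]
    exact PresentedGroup.mk_eq_mk_of_mul_inv_mem (.inl ⟨_, _, .inl hij, rfl⟩)
  braid {i} hi := by
    rw [braidGen_succ ⟨i, by omega⟩, braidGen_succ ⟨i + 1, by omega⟩]
    exact PresentedGroup.mk_eq_mk_of_mul_inv_mem (.inr ⟨_, _, .inl rfl, rfl⟩)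

theorem strandSubgroup_braidGen (m : ℕ) :
    strandSubgroup (fun i => braidGen m (i + 1)) m = ⊤ :=
  eq_top_iff.mpr fun b _ => PresentedGroup.generated_by _ _
    (fun i => braidGen_succ i ▸ mem_strandSubgroup (by omega)) b

theorem lift_eq_one_of_mem_braidRels {G : Type*} [Group G] {m : ℕ} {f : Fin (m - 1) → G}
    (hcomm : ∀ i j : Fin (m - 1), (i : ℕ) + 2 ≤ j → Commute (f i) (f j))
    (hbraid : ∀ i j : Fin (m - 1), (i : ℕ) + 1 = j → f i * f j * f i = f j * f i * f j)
    (r : FreeGroup (Fin (m - 1))) (hr : r ∈ braidRels m) : FreeGroup.lift f r = 1 := by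
  rcases hr with ⟨i, j, hij | hij, rfl⟩ | ⟨i, j, hij | hij, rfl⟩ <;>
    simp only [map_mul, map_inv, FreeGroup.lift_apply_of, mul_inv_eq_one]
  · exact hcomm i j hij
  · exact (hcomm j i hij).symm
  · exact hbraid i j hij
  · exact (hbraid j i hij).symm

/-- Artin's representation of the braid group on `m` strands. It acts on the free group on
`x_0, x_1, …`, fixing `x_j` for `j ≥ m`. -/
def artinRep (m : ℕ) : BraidGroup m →* MulAut (FreeGroup ℕ) :=
  PresentedGroup.toGroup <|
    lift_eq_one_of_mem_braidRels (f := fun i : Fin (m - 1) => artinAut i)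
      (fun _ _ => commute_artinAut) (fun i j hij => by rw [← hij, artinAut_braid])

/-- The transposition of the adjacent strands `i` and `i + 1`. -/
def strandSwap {m : ℕ} (i : Fin (m - 1)) : Equiv.Perm (Fin m) :=
  Equiv.swap ⟨i, by omega⟩ ⟨i + 1, by omega⟩

theorem commute_strandSwap {m : ℕ} {i j : Fin (m - 1)} (h : (i : ℕ) + 2 ≤ j) :
    Commute (strandSwap i) (strandSwap j) := by
  ext k
  simp only [strandSwap, Equiv.Perm.mul_apply, Equiv.swap_apply_def]
  grind

theorem strandSwap_braid {m : ℕ} {i j : Fin (m - 1)} (h : (i : ℕ) + 1 = j) :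
    strandSwap i * strandSwap j * strandSwap i = strandSwap j * strandSwap i * strandSwap j := by
  ext k
  simp only [strandSwap, Equiv.Perm.mul_apply, Equiv.swap_apply_def]
  grind

/-- The permutation of the strands induced by a braid on `m` strands. -/
def braidPerm (m : ℕ) : BraidGroup m →* Equiv.Perm (Fin m) :=
  PresentedGroup.toGroup <|
    lift_eq_one_of_mem_braidRels (fun _ _ => commute_strandSwap) (fun _ _ => strandSwap_braid)

variable {m : ℕ}

theorem artinRep_of (i : Fin (m - 1)) : artinRep m (PresentedGroup.of i) = artinAut i :=
  PresentedGroup.toGroup.of _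

theorem braidPerm_of (i : Fin (m - 1)) : braidPerm m (PresentedGroup.of i) = strandSwap i :=
  PresentedGroup.toGroup.of _

theorem artinRep_injective (m : ℕ) : Function.Injective (artinRep m) := by
  refine (injective_iff_map_eq_one _).mpr fun b hb =>
    eq_one_of_map_eq_one_of_mem_strandSubgroup (isBraidSequence_braidGen m) (fun i hi => ?_)
      (strandSubgroup_braidGen m ▸ Subgroup.mem_top b) hb
  rw [braidGen_succ ⟨i, by omega⟩, artinRep_of]

theorem artinRep_apply_of_le (b : BraidGroup m) {j : ℕ} (hj : m ≤ j) :
    artinRep m b (of j) = of j := by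
  refine PresentedGroup.generated_by _
    ((MulAction.stabilizer (MulAut (FreeGroup ℕ)) (of j)).comap (artinRep m)) (fun i => ?_) b
  change artinRep m (PresentedGroup.of i) (of j) = of j
  rw [artinRep_of, artinAut_of_ne (by omega) (by omega)]

theorem isConj_artinAut_of (i j : ℕ) :
    IsConj (of (Equiv.swap i (i + 1) j)) (artinAut i (of j)) := by
  rcases eq_or_ne j i with rfl | hi
  · rw [Equiv.swap_apply_left, artinAut_of_self]
  rcases eq_or_ne j (i + 1) with rfl | hi'
  · rw [Equiv.swap_apply_right, artinAut_of_succ]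
    exact isConj_iff.mpr ⟨(of (i + 1))⁻¹, by rw [inv_inv]⟩
  · rw [Equiv.swap_apply_of_ne_of_ne hi hi', artinAut_of_ne hi hi']

theorem isConj_artinRep_of (b : BraidGroup m) (j : Fin m) :
    IsConj (of (braidPerm m b j : ℕ)) (artinRep m b (of j)) := by
  have hb : b ∈ Subgroup.closure (Set.range PresentedGroup.of) :=
    PresentedGroup.closure_range_of (braidRels m) ▸ Subgroup.mem_top b
  induction hb using Subgroup.closure_induction generalizing j with
  | one => rw [map_one, map_one]; exact IsConj.refl _
  | mem _ hi =>
    obtain ⟨i, rfl⟩ := hi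
    rw [artinRep_of, braidPerm_of]
    convert isConj_artinAut_of i j
    simp only [strandSwap, Equiv.swap_apply_def]
    grind
  | mul b c _ _ hb hc =>
    simp only [map_mul, Equiv.Perm.mul_apply, MulAut.mul_apply]
    exact (hb _).trans ((artinRep m b).toMonoidHom.map_isConj (hc j))
  | inv b _ hb =>
    have hconj := (artinRep m b⁻¹).toMonoidHom.map_isConj (hb ((braidPerm m b)⁻¹ j))
    simpa using hconj.symm

theorem isConj_artinRep_of_of_braidPerm_eq_one {b : BraidGroup m} (hb : braidPerm m b = 1)
    (j : ℕ) : IsConj (of j) (artinRep m b (of j)) := by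
  rcases lt_or_ge j m with hj | hj
  · simpa [hb] using isConj_artinRep_of b ⟨j, hj⟩
  · rw [artinRep_apply_of_le b hj]

theorem eq_of_pow_eq_pow_of_braidPerm_eq_one {b c : BraidGroup m} (hb : braidPerm m b = 1)
    (hc : braidPerm m c = 1) {N : ℕ} (hN : N ≠ 0) (h : b ^ N = c ^ N) : b = c := by
  let φ := (MulDistribMulAction.toMonoidEnd (MulAut (FreeGroup ℕ)) (FreeGroup ℕ)).comp (artinRep m)
  have hφ : φ b = φ c := eq_of_pow_eq_pow_of_forall_isConj
    (isConj_artinRep_of_of_braidPerm_eq_one hb) (isConj_artinRep_of_of_braidPerm_eq_one hc) hN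
    (by rw [← map_pow, ← map_pow, h])
  exact artinRep_injective m (MulEquiv.ext fun x => DFunLike.congr_fun hφ x)

theorem commute_pow_orderOf_braidPerm {a c : BraidGroup m} {N : ℕ} (hN : N ≠ 0)
    (h : Commute a (c ^ N)) : Commute a (c ^ orderOf (braidPerm m c)) := by
  set k := orderOf (braidPerm m c)
  have hpure : braidPerm m (c ^ k) = 1 := by rw [map_pow, pow_orderOf_eq_one]
  have hpow : (a * c ^ k * a⁻¹) ^ N = (c ^ k) ^ N := by
    rw [conj_pow, pow_right_comm, (h.pow_right k).eq, mul_inv_cancel_right]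
  have hconj : a * c ^ k * a⁻¹ = c ^ k :=
    eq_of_pow_eq_pow_of_braidPerm_eq_one (by simp [hpure]) hpure hN hpow
  exact mul_inv_eq_iff_eq_mul.mp hconj

end BraidGroup

section HurwitzOrbit

variable {G : Type*} [Group G]

theorem hurwitzOrbit_eq_orbit {n : ℕ} (s : Fin n → G) :
    hurwitzOrbit s =
      MulAction.orbit (Subgroup.closure (Set.range (hEquiv (G := G) (n := n)))) s := by
  have hrange : (FreeGroup.lift fun i => MulOpposite.op (hEquiv (G := G) (n := n) i)).range =
      (Subgroup.closure (Set.range (hEquiv (G := G) (n := n)))).op := by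
    rw [FreeGroup.range_lift_eq_closure, Subgroup.op_closure]
    congr 1
    exact (Set.range_comp MulOpposite.op hEquiv).trans
      (MulOpposite.opEquiv.image_eq_preimage_symm _)
  ext t
  constructor
  · rintro ⟨w, rfl⟩
    exact ⟨⟨_, Subgroup.mem_op.mp (hrange ▸ ⟨w, rfl⟩)⟩, rfl⟩
  · rintro ⟨⟨g, hg⟩, rfl⟩
    obtain ⟨w, hw⟩ := hrange.ge (x := MulOpposite.op g) hg
    exact ⟨w, by simp [hurwitzAct, hw, Subgroup.smul_def]⟩

/-- The elementary Hurwitz move `(a, b) ↦ (b, b⁻¹ a b)` on pairs, which generates the action of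
the braid group on two strands. -/
def hurwitzMove : Equiv.Perm (Fin 2 → G) :=
  hEquiv (n := 2) ⟨0, one_pos⟩

theorem hurwitzMove_apply_zero (s : Fin 2 → G) : hurwitzMove s 0 = s 1 := by
  simp [hurwitzMove, hEquiv]

theorem hurwitzMove_apply_one (s : Fin 2 → G) : hurwitzMove s 1 = (s 1)⁻¹ * s 0 * s 1 := by
  simp [hurwitzMove, hEquiv]

theorem hurwitzOrbit_eq_orbit_zpowers (s : Fin 2 → G) :
    hurwitzOrbit s = MulAction.orbit (Subgroup.zpowers (hurwitzMove (G := G))) s := by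
  have hrange : Set.range (hEquiv (G := G) (n := 2)) = {hurwitzMove} :=
    Set.range_unique (ι := Fin 1)
  rw [hurwitzOrbit_eq_orbit, hrange, Subgroup.zpowers_eq_closure]

theorem ncard_hurwitzOrbit (s : Fin 2 → G) :
    (hurwitzOrbit s).ncard = Function.minimalPeriod hurwitzMove s := by
  rw [hurwitzOrbit_eq_orbit_zpowers, ← Nat.card_coe_set_eq,
    Nat.card_congr (MulAction.orbitZPowersEquiv hurwitzMove s), Nat.card_zmod]
  rfl

theorem hurwitzMove_apply_zero_mul_apply_one (s : Fin 2 → G) :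
    hurwitzMove s 0 * hurwitzMove s 1 = s 0 * s 1 := by
  simp [hurwitzMove_apply_zero, hurwitzMove_apply_one, mul_assoc]

theorem hurwitzMove_hurwitzMove (s : Fin 2 → G) (i : Fin 2) :
    hurwitzMove (hurwitzMove s) i = (s 0 * s 1)⁻¹ * s i * (s 0 * s 1) := by
  fin_cases i <;> simp [hurwitzMove_apply_zero, hurwitzMove_apply_one, mul_assoc]

theorem iterate_two_mul_hurwitzMove (k : ℕ) (s : Fin 2 → G) (i : Fin 2) :
    hurwitzMove^[2 * k] s i = ((s 0 * s 1) ^ k)⁻¹ * s i * (s 0 * s 1) ^ k := by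
  induction k generalizing s with
  | zero => simp
  | succ k ih =>
    rw [mul_add_one, Function.iterate_add_apply, ih]
    change ((hurwitzMove (hurwitzMove s) 0 * hurwitzMove (hurwitzMove s) 1) ^ k)⁻¹ *
      hurwitzMove (hurwitzMove s) i *
      (hurwitzMove (hurwitzMove s) 0 * hurwitzMove (hurwitzMove s) 1) ^ k = _
    rw [hurwitzMove_apply_zero_mul_apply_one, hurwitzMove_apply_zero_mul_apply_one,
      hurwitzMove_hurwitzMove, pow_succ']
    simp only [mul_inv_rev, mul_assoc]

theorem isPeriodicPt_hurwitzMove_two_mul_iff {s : Fin 2 → G} {k : ℕ} :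
    Function.IsPeriodicPt hurwitzMove (2 * k) s ↔ ∀ i, Commute (s i) ((s 0 * s 1) ^ k) := by
  simp only [Function.IsPeriodicPt, Function.IsFixedPt, funext_iff, iterate_two_mul_hurwitzMove,
    mul_assoc, inv_mul_eq_iff_eq_mul, Commute, SemiconjBy]

theorem exists_forall_commute_pow_of_finite_hurwitzOrbit {s : Fin 2 → G}
    (h : (hurwitzOrbit s).Finite) :
    ∃ N ≠ 0, ∀ i, Commute (s i) ((s 0 * s 1) ^ N) := by
  have hs : s ∈ hurwitzOrbit s := ⟨1, by simp [hurwitzAct]⟩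
  refine ⟨(hurwitzOrbit s).ncard, (Set.ncard_pos h).mpr ⟨s, hs⟩ |>.ne', ?_⟩
  rw [← isPeriodicPt_hurwitzMove_two_mul_iff, ncard_hurwitzOrbit]
  exact (Function.isPeriodicPt_minimalPeriod _ _).const_mul 2

theorem ncard_hurwitzOrbit_le_of_forall_commute_pow {s : Fin 2 → G} {k : ℕ} (hk : 0 < k)
    (h : ∀ i, Commute (s i) ((s 0 * s 1) ^ k)) : (hurwitzOrbit s).ncard ≤ 2 * k := by
  rw [ncard_hurwitzOrbit]
  exact (isPeriodicPt_hurwitzMove_two_mul_iff.mpr h).minimalPeriod_le (by omega)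

theorem ncard_hurwitzOrbit_le_two_mul_orderOf_braidPerm {m : ℕ} {s : Fin 2 → BraidGroup m}
    (h : (hurwitzOrbit s).Finite) :
    (hurwitzOrbit s).ncard ≤ 2 * orderOf (braidPerm m (s 0 * s 1)) := by
  obtain ⟨N, hN, hcomm⟩ := exists_forall_commute_pow_of_finite_hurwitzOrbit h
  exact ncard_hurwitzOrbit_le_of_forall_commute_pow (orderOf_pos _) fun i =>
    commute_pow_orderOf_braidPerm hN (hcomm i)

end HurwitzOrbit

theorem orderOf_perm_le_factorial_pred {α : Type*} [Fintype α] (hα : 4 ≤ Fintype.card α)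
    (σ : Equiv.Perm α) : orderOf σ ≤ (Fintype.card α - 1).factorial := by
  classical
  have hsum := σ.sum_cycleType_le
  rw [← σ.lcm_cycleType]
  by_cases hcycle : Fintype.card α ∈ σ.cycleType
  · have hlcm : σ.cycleType.lcm = Fintype.card α := by
      rw [← Multiset.cons_erase hcycle, Multiset.sum_cons] at hsum
      have herase : σ.cycleType.erase (Fintype.card α) = 0 := by
        refine Multiset.eq_zero_of_forall_notMem fun l hl => ?_
        have hle := Multiset.le_sum_of_mem hl
        have htwo := Equiv.Perm.two_le_of_mem_cycleType (Multiset.mem_of_mem_erase hl)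
        omega
      rw [← Multiset.cons_erase hcycle, herase]
      simp
    have hlt := Nat.lt_factorial_self (n := Fintype.card α - 1) (by omega)
    omega
  · refine Nat.le_of_dvd (Nat.factorial_pos _) (Multiset.lcm_dvd.mpr fun l hl => ?_)
    have hle := Multiset.le_sum_of_mem hl
    have htwo := Equiv.Perm.two_le_of_mem_cycleType hl
    have hne : l ≠ Fintype.card α := ne_of_mem_of_not_mem hl hcycle
    exact Nat.dvd_factorial (by omega) (by omega)

/-- For `m ≥ 4`, a degree `m`, length `2` braid system with finite Hurwitz
orbit has orbit of size at most `2·(m-1)!`. -/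
theorem hurwitzOrbit_card_le_two_mul_factorial {m : ℕ} (hm : 4 ≤ m)
    (s : Fin 2 → BraidGroup m) (h : (hurwitzOrbit s).Finite) :
    (hurwitzOrbit s).ncard ≤ 2 * (m - 1).factorial := by
  have horder := orderOf_perm_le_factorial_pred (by simpa using hm) (braidPerm m (s 0 * s 1))
  rw [Fintype.card_fin] at horder
  exact (ncard_hurwitzOrbit_le_two_mul_orderOf_braidPerm h).trans (Nat.mul_le_mul_left 2 horder)
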